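/- arXiv:2111.04860 — 4 statements merged into one kernel-verified Lean document; each statement's English description precedes it below -/
import Mathlib

section
/- Let L, M ≥ 1 and N = L·M. Let x : Fin N → ℂ be a discrete signal and let X : ℤ → ℂ denote its discrete Fourier transform, X(k) = Σ_{j=0}^{N-1} x(j)·exp(−2πi·j·k/N). Let y : Fin M → ℂ be the downsampled signal y(m) = x(m·L), and let Y : ℤ → ℂ be its discrete Fourier transform, Y(k) = Σ_{m=0}^{M-1} y(m)·exp(−2πi·m·k/M). Then for every integer k, Y(k) = (1/L) · Σ_{l=0}^{L-1} X(k + l·M); that is, the DFT of the L-fold downsampled signal equals 1/L times the L-fold alias of the DFT of the original signal. -/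
theorem alias_geom (L : ℕ) (hL : 1 ≤ L) (j : ℕ) :
    ∑ l ∈ Finset.range L,
      Complex.exp (-2 * (Real.pi : ℂ) * Complex.I * (j : ℂ) * (l : ℂ) / (L : ℂ))
      = if L ∣ j then (L : ℂ) else 0 := by
  have hL0 : L ≠ 0 := by omega
  have hLc : (L : ℂ) ≠ 0 := by exact_mod_cast hL0
  have hz := Complex.isPrimitiveRoot_exp L hL0
  set z := Complex.exp (2 * (Real.pi : ℂ) * Complex.I / (L : ℂ)) with hzdef
  have key : ∀ l : ℕ, Complex.exp (-2 * (Real.pi : ℂ) * Complex.I * (j : ℂ) * (l : ℂ) / (L : ℂ))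
      = ((z ^ j)⁻¹) ^ l := by
    intro l
    rw [hzdef, ← Complex.exp_nat_mul, ← Complex.exp_neg, ← Complex.exp_nat_mul]
    congr 1
    ring
  simp_rw [key]
  split_ifs with h
  · rw [(hz.pow_eq_one_iff_dvd j).2 h]
    simp
  · have hne : (z ^ j)⁻¹ ≠ 1 := by
      intro h1
      exact h ((hz.pow_eq_one_iff_dvd j).1 (inv_eq_one.1 h1))
    rw [geom_sum_eq hne, inv_pow, ← pow_mul, mul_comm j L, pow_mul, hz.pow_eq_one]
    simp

/-- **Downsampling theorem for the DFT.**
Let `N = L * M`. If `X` is the `N`-point DFT of the signal `x : Fin N → ℂ`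
(viewed as a function of `k : ℤ`) and `Y` is the `M`-point DFT of the
`L`-fold downsampled signal `m ↦ x (m * L)`, then for every integer `k`,
`Y k = (1/L) * ∑_{l=0}^{L-1} X (k + l * M)`, i.e. the DFT of the downsampled
signal equals `1/L` times the `L`-fold alias of the original DFT. -/
theorem dft_downsample_eq_alias
    (L M : ℕ) (hL : 1 ≤ L) (hM : 1 ≤ M) (N : ℕ) (hN : N = L * M)
    (x : Fin N → ℂ) (X Y : ℤ → ℂ)
    (hX : ∀ k : ℤ, X k =
      ∑ j : Fin N, x j *
        Complex.exp (-2 * (Real.pi : ℂ) * Complex.I * ((j : ℕ) : ℂ) * (k : ℂ) / (N : ℂ)))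
    (hY : ∀ k : ℤ, Y k =
      ∑ m : Fin M, x ⟨(m : ℕ) * L, by nlinarith [m.isLt, hL, hN]⟩ *
        Complex.exp (-2 * (Real.pi : ℂ) * Complex.I * ((m : ℕ) : ℂ) * (k : ℂ) / (M : ℂ))) :
    ∀ k : ℤ, Y k = (1 / (L : ℂ)) * ∑ l ∈ Finset.range L, X (k + (l : ℤ) * (M : ℤ)) := by
  intro k
  have hL0 : (L : ℂ) ≠ 0 := by exact_mod_cast (by omega : L ≠ 0)
  have hM0 : (M : ℂ) ≠ 0 := by exact_mod_cast (by omega : M ≠ 0)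
  have hNc : (N : ℂ) = L * M := by rw [hN]; push_cast; rfl
  have step : ∑ l ∈ Finset.range L, X (k + (l : ℤ) * (M : ℤ)) =
      ∑ j : Fin N, x j *
        Complex.exp (-2 * (Real.pi : ℂ) * Complex.I * ((j : ℕ) : ℂ) * (k : ℂ) / (N : ℂ)) *
        (if L ∣ (j : ℕ) then (L : ℂ) else 0) := by
    simp_rw [hX]
    rw [Finset.sum_comm]
    refine Finset.sum_congr rfl fun j _ => ?_
    rw [← alias_geom L hL, Finset.mul_sum]
    refine Finset.sum_congr rfl fun l _ => ?_
    rw [mul_assoc (x j), ← Complex.exp_add]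
    congr 2
    rw [hNc]
    push_cast
    field_simp
    ring
  rw [step, hY, Finset.mul_sum]
  refine Finset.sum_of_injOn
    (fun m : Fin M => (⟨(m : ℕ) * L, by nlinarith [m.isLt, hL, hN]⟩ : Fin N)) ?_ ?_ ?_ ?_
  · intro a _ b _ hab
    have h1 : (a : ℕ) * L = b * L := congrArg Fin.val hab
    exact Fin.ext (Nat.eq_of_mul_eq_mul_right (by omega) h1)
  · intro a _
    simp
  · intro j _ hj
    have hd : ¬ L ∣ (j : ℕ) := by
      rintro ⟨m, hm⟩
      apply hj
      have hlt : m < M := by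
        have h2 := j.isLt
        have h3 : L * m < L * M := by omega
        exact lt_of_mul_lt_mul_left h3 (Nat.zero_le L)
      refine ⟨⟨m, hlt⟩, by simp, Fin.ext ?_⟩
      simp [hm, mul_comm]
    simp [hd]
  · intro m _
    have he : -2 * (Real.pi : ℂ) * Complex.I * (((m : ℕ) * L : ℕ) : ℂ) * (k : ℂ) / (N : ℂ)
        = -2 * (Real.pi : ℂ) * Complex.I * ((m : ℕ) : ℂ) * (k : ℂ) / (M : ℂ) := by
      rw [hNc]
      push_cast
      field_simp
    dsimp only
    rw [he, if_pos (Dvd.intro_left _ rfl)]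
    field_simp
end

section
/- Let L, M ≥ 1 and N = L·M. Let x : Fin N → ℂ with discrete Fourier transform X(k) = Σ_{j=0}^{N-1} x(j)·exp(−2πi·j·k/N), and suppose X(k + l·M) = 0 for all k ∈ {0,…,M−1} and all l ∈ {1,…,L−1} (the spectrum vanishes at and above the Nyquist frequency of the lower sampling rate). Then the DFT Y(k) = Σ_{m=0}^{M-1} x(m·L)·exp(−2πi·m·k/M) of the L-fold downsampled signal satisfies Y(k) = (1/L)·X(k) for all k ∈ {0,…,M−1}; that is, downsampling introduces no aliasing and preserves the spectrum up to the factor 1/L. -/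
theorem alias_geom_sum (L : ℕ) (hL : 1 ≤ L) (j : ℕ) :
    ∑ l ∈ Finset.range L, ((Complex.exp (2 * Real.pi * Complex.I / L))⁻¹ ^ j) ^ l
      = if L ∣ j then (L : ℂ) else 0 := by
  have hp := (Complex.isPrimitiveRoot_exp L (by omega)).inv
  split_ifs with h
  · rw [(hp.pow_eq_one_iff_dvd j).2 h]
    simp
  · have h1 := mt (hp.pow_eq_one_iff_dvd j).1 h
    rw [geom_sum_eq h1, ← pow_mul, mul_comm j L, pow_mul, hp.pow_eq_one]
    simp

theorem alias_factor (L M N k j : ℕ) (hL0 : (L : ℂ) ≠ 0) (hM0 : (M : ℂ) ≠ 0)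
    (hNC : (N : ℂ) = L * M) {c : ℂ} :
    ∑ l ∈ Finset.range L, c *
        Complex.exp (-2 * (Real.pi : ℂ) * Complex.I * (j : ℂ) *
          (((k : ℤ) + (l : ℤ) * (M : ℤ) : ℤ) : ℂ) / (N : ℂ))
      = c * Complex.exp (-2 * (Real.pi : ℂ) * Complex.I * (j : ℂ) * (k : ℂ) / (N : ℂ)) *
        ∑ l ∈ Finset.range L, ((Complex.exp (2 * Real.pi * Complex.I / L))⁻¹ ^ j) ^ l := by
  rw [Finset.mul_sum]
  refine Finset.sum_congr rfl fun l _ => ?_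
  rw [← Complex.exp_neg, ← Complex.exp_nat_mul, ← Complex.exp_nat_mul, mul_assoc c,
    ← Complex.exp_add, hNC]
  congr 2
  push_cast
  field_simp
  ring

/-- **Alias-free downsampling.**
Let `N = L * M` and let `X` be the `N`-point DFT of `x : Fin N → ℂ`.
If the spectrum vanishes at and above the Nyquist frequency of the lower
sampling rate, i.e. `X (k + l * M) = 0` for all `k ∈ {0,…,M-1}` and all
`l ∈ {1,…,L-1}`, then the `M`-point DFT `Y` of the `L`-fold downsampled
signal satisfies `Y k = (1/L) * X k` for all `k ∈ {0,…,M-1}`. -/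
theorem dft_downsample_no_alias
    (L M : ℕ) (hL : 1 ≤ L) (hM : 1 ≤ M) (N : ℕ) (hN : N = L * M)
    (x : Fin N → ℂ) (X Y : ℤ → ℂ)
    (hX : ∀ k : ℤ, X k =
      ∑ j : Fin N, x j *
        Complex.exp (-2 * (Real.pi : ℂ) * Complex.I * ((j : ℕ) : ℂ) * (k : ℂ) / (N : ℂ)))
    (hY : ∀ k : ℤ, Y k =
      ∑ m : Fin M, x ⟨(m : ℕ) * L, by nlinarith [m.isLt, hL, hN]⟩ *
        Complex.exp (-2 * (Real.pi : ℂ) * Complex.I * ((m : ℕ) : ℂ) * (k : ℂ) / (M : ℂ)))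
    (hzero : ∀ k : ℕ, k < M → ∀ l : ℕ, 1 ≤ l → l < L →
      X ((k : ℤ) + (l : ℤ) * (M : ℤ)) = 0) :
    ∀ k : ℕ, k < M → Y (k : ℤ) = (1 / (L : ℂ)) * X (k : ℤ) := by
  intro k hk
  have hL0 : (L : ℂ) ≠ 0 := by exact_mod_cast (by omega : L ≠ 0)
  have hM0 : (M : ℂ) ≠ 0 := by exact_mod_cast (by omega : M ≠ 0)
  have hNC : (N : ℂ) = L * M := by rw [hN]; push_cast; rfl
  have hsum : ∑ l ∈ Finset.range L, X ((k : ℤ) + (l : ℤ) * (M : ℤ)) = X k := by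
    rw [Finset.sum_eq_single_of_mem 0 (Finset.mem_range.2 (by omega))]
    · simp
    · intro l hl hl0
      exact hzero k hk l (by omega) (Finset.mem_range.1 hl)
  have hgeom := alias_geom_sum L hL
  rw [← hsum]
  simp_rw [hX]
  rw [Finset.sum_comm, hY, Finset.mul_sum]
  refine Fintype.sum_of_injective
    (fun m : Fin M => (⟨(m : ℕ) * L, by nlinarith [m.isLt, hL, hN]⟩ : Fin N)) ?_ _ _ ?_ ?_
  · intro a b hab
    have h := Fin.mk.inj_iff.1 hab
    exact Fin.ext (Nat.eq_of_mul_eq_mul_right (by omega) h)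
  · intro j hj
    have hnd : ¬ L ∣ (j : ℕ) := by
      rintro ⟨c, hc⟩
      apply hj
      have hcM : c < M := by
        have := j.isLt
        rw [hc, hN] at this
        exact Nat.lt_of_mul_lt_mul_left this
      exact ⟨⟨c, hcM⟩, Fin.ext (by simp [hc, mul_comm])⟩
    have h := hgeom j
    rw [if_neg hnd] at h
    rw [alias_factor L M N k j hL0 hM0 hNC, h]
    simp
  · intro m
    have h := hgeom ((m : ℕ) * L)
    rw [if_pos (Dvd.intro_left _ rfl)] at h
    have h2 := fun c : ℂ => alias_factor L M N k (m * L) hL0 hM0 hNC (c := c)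
    simp only [h2, h]
    have h3 : -2 * (Real.pi : ℂ) * Complex.I * (((m : ℕ) * L : ℕ) : ℂ) * (k : ℂ) / (N : ℂ)
        = -2 * (Real.pi : ℂ) * Complex.I * ((m : ℕ) : ℂ) * ((k : ℤ) : ℂ) / (M : ℂ) := by
      rw [hNC]; push_cast; field_simp
    rw [h3]
    field_simp
end

section
/- The sine function is a Tauber-Wiener function: for every pair of real numbers a < b and every continuous function f : [a,b] → ℝ and every ε > 0, there exist I ∈ ℕ and real numbers c_1,…,c_I, λ_1,…,λ_I, θ_1,…,θ_I such that |f(t) − Σ_{i=1}^{I} c_i·sin(λ_i·t + θ_i)| ≤ ε for all t ∈ [a,b]. Equivalently, the linear span of { t ↦ sin(λt + θ) : λ, θ ∈ ℝ } is dense in C([a,b], ℝ) with the supremum norm. -/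
/-- The continuous function `t ↦ sin (l t + θ)` on `[a,b]`. -/
noncomputable def sinFun (a b l θ : ℝ) : C(Set.Icc a b, ℝ) :=
  ⟨fun t => Real.sin (l * t + θ), by fun_prop⟩

/-- The set of all ridge functions `t ↦ sin (l t + θ)` on `[a,b]`. -/
def sinSet (a b : ℝ) : Set C(Set.Icc a b, ℝ) := {g | ∃ l θ, g = sinFun a b l θ}

lemma sinSet_mul (a b : ℝ) (x y : C(Set.Icc a b, ℝ)) (hx : x ∈ Submodule.span ℝ (sinSet a b))
    (hy : y ∈ Submodule.span ℝ (sinSet a b)) : x * y ∈ Submodule.span ℝ (sinSet a b) := by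
  have h : Submodule.span ℝ (sinSet a b) * Submodule.span ℝ (sinSet a b)
      ≤ Submodule.span ℝ (sinSet a b) := by
    rw [Submodule.span_mul_span, Submodule.span_le]
    rintro _ ⟨_, ⟨l, θ, rfl⟩, _, ⟨m, η, rfl⟩, rfl⟩
    have e : sinFun a b l θ * sinFun a b m η
        = (1 / 2 : ℝ) • sinFun a b (l - m) (θ - η + Real.pi / 2)
          + (-1 / 2 : ℝ) • sinFun a b (l + m) (θ + η + Real.pi / 2) := by
      ext t
      simp only [sinFun, ContinuousMap.mul_apply, ContinuousMap.add_apply,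
        ContinuousMap.smul_apply, ContinuousMap.coe_mk, smul_eq_mul, ← add_assoc,
        Real.sin_add_pi_div_two]
      have h1 : (l - m) * (t : ℝ) + (θ - η) = (l * t + θ) - (m * t + η) := by ring
      have h2 : (l + m) * (t : ℝ) + θ + η = (l * t + θ) + (m * t + η) := by ring
      rw [h1, h2, Real.cos_sub, Real.cos_add (l * (t : ℝ) + θ) (m * t + η)]
      ring
    change sinFun a b l θ * sinFun a b m η ∈ Submodule.span ℝ (sinSet a b)
    rw [e]
    exact Submodule.add_mem _ (Submodule.smul_mem _ _ (Submodule.subset_span ⟨_, _, rfl⟩))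
      (Submodule.smul_mem _ _ (Submodule.subset_span ⟨_, _, rfl⟩))
  exact h (Submodule.mul_mem_mul hx hy)

lemma sinSet_one (a b : ℝ) : (1 : C(Set.Icc a b, ℝ)) ∈ Submodule.span ℝ (sinSet a b) := by
  refine Submodule.subset_span ⟨0, Real.pi / 2, ?_⟩
  ext t
  simp [sinFun]

/-- The span of the ridge functions as a subalgebra. -/
noncomputable def sinAlg (a b : ℝ) : Subalgebra ℝ C(Set.Icc a b, ℝ) :=
  (Submodule.span ℝ (sinSet a b)).toSubalgebra (sinSet_one a b) (sinSet_mul a b)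

lemma sinAlg_sep (a b : ℝ) : (sinAlg a b).SeparatesPoints := by
  intro x y hxy
  have hne : (y : ℝ) - x ≠ 0 := fun h => hxy (Subtype.ext (by linarith))
  refine ⟨_, ⟨sinFun a b (Real.pi / 2 / (y - x)) (-(Real.pi / 2 / (y - x) * x)),
    Submodule.subset_span ⟨_, _, rfl⟩, rfl⟩, ?_⟩
  have h2 : Real.pi / 2 / ((y : ℝ) - x) * y + -(Real.pi / 2 / ((y : ℝ) - x) * x)
      = Real.pi / 2 := by
    field_simp
    ring
  simp only [sinFun, ContinuousMap.coe_mk]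
  rw [h2, add_neg_cancel]
  simp

/-- **`sin` is a Tauber-Wiener function.**
For every interval `[a,b]` (with `a < b`), every continuous function
`f` on `[a,b]`, and every `ε > 0`, there is a finite linear combination
`∑ i, c i * sin (λ i * t + θ i)` uniformly within `ε` of `f` on `[a,b]`;
i.e. the span of `{t ↦ sin (λ t + θ)}` is dense in `C([a,b], ℝ)`. -/
theorem sin_isTauberWiener :
    ∀ a b : ℝ, a < b → ∀ f : ℝ → ℝ, ContinuousOn f (Set.Icc a b) →
      ∀ ε : ℝ, 0 < ε →
        ∃ (I : ℕ) (c lam θ : Fin I → ℝ),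
          ∀ t ∈ Set.Icc a b,
            |f t - ∑ i, c i * Real.sin (lam i * t + θ i)| ≤ ε := by
  intro a b _ f hf ε hε
  obtain ⟨⟨g, hg⟩, hgf⟩ :=
    ContinuousMap.exists_mem_subalgebra_near_continuous_of_separatesPoints (sinAlg a b)
      (sinAlg_sep a b) _ hf.domRestrict ε hε
  have hg' : g ∈ Submodule.span ℝ (sinSet a b) := hg
  obtain ⟨n, c, v, hv⟩ := Submodule.mem_span_set'.1 hg'
  choose l θ hl using fun i => (v i).2
  refine ⟨n, c, l, θ, fun t ht => ?_⟩
  have h := hgf ⟨t, ht⟩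
  rw [Real.norm_eq_abs, abs_sub_comm] at h
  have e : g ⟨t, ht⟩ = ∑ i, c i * Real.sin (l i * t + θ i) := by
    rw [← hv]
    simp [hl, sinFun]
  rw [← e]
  exact h.le
end

section
/- Let σ : ℝ → ℝ be a Tauber-Wiener function, i.e., for every a < b the linear span of { t ↦ σ(λt + θ) : λ, θ ∈ ℝ } is dense in C([a,b], ℝ) with the supremum norm. Let d ≥ 1, let K₁ ⊂ ℝ^d be compact, let V be a compact subset of C(K₁, ℝ) (with the supremum norm), and let f : V → ℝ be a continuous functional. Then for every ε > 0 there exist m, M ∈ ℕ, points x_1,…,x_m ∈ K₁, and real numbers c_i, θ_i (1 ≤ i ≤ M) and ξ_{ij} (1 ≤ i ≤ M, 1 ≤ j ≤ m), all independent of u, such that |f(u) − Σ_{i=1}^{M} c_i·σ( Σ_{j=1}^{m} ξ_{ij}·u(x_j) + θ_i )| ≤ ε for all u ∈ V. -/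
/-- A function `σ : ℝ → ℝ` is Tauber-Wiener if for every interval `[a,b]`
the linear span of `{t ↦ σ (λ t + θ) : λ, θ ∈ ℝ}` is dense in
`C([a,b], ℝ)` with the supremum norm. -/
def IsTauberWiener (σ : ℝ → ℝ) : Prop :=
  ∀ a b : ℝ, a < b → ∀ f : ℝ → ℝ, ContinuousOn f (Set.Icc a b) →
    ∀ ε : ℝ, 0 < ε →
      ∃ (I : ℕ) (c lam θ : Fin I → ℝ),
        ∀ t ∈ Set.Icc a b, |f t - ∑ i, c i * σ (lam i * t + θ i)| ≤ ε

/-- The linear functional attached to a finitely supported family of sensor weights. -/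
noncomputable def sensorMap {X : Type*} [TopologicalSpace X] (V : Set C(X, ℝ)) :
    (X →₀ ℝ) →ₗ[ℝ] C(V, ℝ) :=
  Finsupp.linearCombination ℝ
    (fun x : X => (⟨fun u : V => (u : C(X, ℝ)) x, by fun_prop⟩ : C(V, ℝ)))

lemma sensorMap_apply {X : Type*} [TopologicalSpace X] (V : Set C(X, ℝ)) (a : X →₀ ℝ)
    (s : Finset X) (hs : a.support ⊆ s) (u : V) :
    sensorMap V a u = ∑ x ∈ s, a x * (u : C(X, ℝ)) x := by
  unfold sensorMap
  rw [Finsupp.linearCombination_apply, Finsupp.sum_of_support_subset a hs _ (by simp)]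
  simp [ContinuousMap.sum_apply]

/-- The space of two-layer nets. -/
noncomputable def netSpace {X : Type*} [TopologicalSpace X] (σ : ℝ → ℝ) (V : Set C(X, ℝ)) :
    Submodule ℝ (V → ℝ) :=
  Submodule.span ℝ (Set.range fun p : (X →₀ ℝ) × ℝ => fun u : V => σ (sensorMap V p.1 u + p.2))

lemma netSpace_form {X : Type*} [TopologicalSpace X] (σ : ℝ → ℝ) (V : Set C(X, ℝ))
    (h : V → ℝ) (hh : h ∈ netSpace σ V) :
    ∃ (m M : ℕ) (xs : Fin m → X) (c θ : Fin M → ℝ) (ξ : Fin M → Fin m → ℝ),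
      ∀ u : V, h u = ∑ i, c i * σ (∑ j, ξ i j * (u : C(X, ℝ)) (xs j) + θ i) := by
  classical
  obtain ⟨w, rfl⟩ := Finsupp.mem_span_range_iff_exists_finsupp.1 hh
  let s : Finset X := w.support.biUnion fun p => p.1.support
  let e := s.equivFin
  let e' := w.support.equivFin
  refine ⟨s.card, w.support.card, fun j => (e.symm j : X), fun i => w (e'.symm i),
    fun i => (e'.symm i : (X →₀ ℝ) × ℝ).2,
    fun i j => (e'.symm i : (X →₀ ℝ) × ℝ).1 (e.symm j), fun u => ?_⟩
  rw [e'.symm.sum_comp (fun p : w.support => w p * σ (∑ j, (p : (X →₀ ℝ) × ℝ).1 (e.symm j) *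
    (u : C(X, ℝ)) (e.symm j) + (p : (X →₀ ℝ) × ℝ).2))]
  rw [Finset.sum_coe_sort w.support (fun p => w p * σ (∑ j, p.1 (e.symm j) *
    (u : C(X, ℝ)) (e.symm j) + p.2))]
  rw [Finsupp.sum, Finset.sum_apply]
  refine Finset.sum_congr rfl fun p hp => ?_
  rw [e.symm.sum_comp (fun x : s => p.1 x * (u : C(X, ℝ)) x),
    Finset.sum_coe_sort s (fun x => p.1 x * (u : C(X, ℝ)) x),
    ← sensorMap_apply V p.1 s (Finset.subset_biUnion_of_mem (fun p : (X →₀ ℝ) × ℝ => p.1.support) hp)]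
  simp

/-- Exponentials of sensor functionals. -/
noncomputable def expMap {X : Type*} [TopologicalSpace X] (V : Set C(X, ℝ)) (a : X →₀ ℝ) :
    C(V, ℝ) := ⟨fun u => Real.exp (sensorMap V a u), by fun_prop⟩

/-- The monoid of exponentials of sensor functionals. -/
noncomputable def expMonoid {X : Type*} [TopologicalSpace X] (V : Set C(X, ℝ)) :
    Submonoid C(V, ℝ) where
  carrier := Set.range (expMap V)
  one_mem' := ⟨0, by ext u; simp [expMap]⟩
  mul_mem' := by
    rintro _ _ ⟨a, rfl⟩ ⟨b, rfl⟩
    exact ⟨a + b, by ext u; simp [expMap, Real.exp_add]⟩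

lemma expMap_approx {X : Type*} [TopologicalSpace X] (σ : ℝ → ℝ) (hσ : IsTauberWiener σ)
    (V : Set C(X, ℝ)) [CompactSpace V] (a : X →₀ ℝ) (ε : ℝ) (hε : 0 < ε) :
    ∃ h ∈ netSpace σ V, ∀ u, |expMap V a u - h u| ≤ ε := by
  obtain ⟨I, c, lam, θ, H⟩ := hσ (-(‖sensorMap V a‖ + 1)) (‖sensorMap V a‖ + 1)
    (by linarith [norm_nonneg (sensorMap V a)]) Real.exp Real.continuous_exp.continuousOn ε hε
  refine ⟨∑ i, c i • (fun u : V => σ (sensorMap V (lam i • a) u + θ i)),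
    Submodule.sum_mem _ fun i _ => Submodule.smul_mem _ _
      (Submodule.subset_span ⟨(lam i • a, θ i), rfl⟩), fun u => ?_⟩
  have hb := abs_le.1 (((sensorMap V a).norm_coe_le_norm u))
  have := H (sensorMap V a u) ⟨by linarith [hb.1], by linarith [hb.2]⟩
  simpa [expMap, Finset.sum_apply] using this

lemma span_approx {X : Type*} [TopologicalSpace X] (σ : ℝ → ℝ) (hσ : IsTauberWiener σ)
    (V : Set C(X, ℝ)) [CompactSpace V] (g : C(V, ℝ))
    (hg : g ∈ Submodule.span ℝ (Set.range (expMap V))) :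
    ∀ ε : ℝ, 0 < ε → ∃ h ∈ netSpace σ V, ∀ u, |g u - h u| ≤ ε := by
  induction hg using Submodule.span_induction with
  | mem x hx =>
    obtain ⟨a, rfl⟩ := hx
    exact fun ε hε => expMap_approx σ hσ V a ε hε
  | zero => exact fun ε hε => ⟨0, Submodule.zero_mem _, fun u => by simpa using hε.le⟩
  | add x y _ _ hx hy =>
    intro ε hε
    obtain ⟨h, hh, H⟩ := hx (ε / 2) (by positivity)
    obtain ⟨k, hk, K⟩ := hy (ε / 2) (by positivity)
    refine ⟨h + k, Submodule.add_mem _ hh hk, fun u => ?_⟩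
    have h1 := abs_le.1 (H u)
    have h2 := abs_le.1 (K u)
    simp only [ContinuousMap.add_apply, Pi.add_apply]
    exact abs_le.2 ⟨by linarith [h1.1, h2.1], by linarith [h1.2, h2.2]⟩
  | smul r x _ hx =>
    intro ε hε
    obtain ⟨h, hh, H⟩ := hx (ε / (|r| + 1)) (by positivity)
    refine ⟨r • h, Submodule.smul_mem _ _ hh, fun u => ?_⟩
    simp only [ContinuousMap.smul_apply, Pi.smul_apply, smul_eq_mul]
    rw [← mul_sub, abs_mul]
    calc |r| * |x u - h u| ≤ (|r| + 1) * (ε / (|r| + 1)) := by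
          gcongr
          · linarith
          · exact H u
      _ = ε := by field_simp

lemma exp_dense {X : Type*} [TopologicalSpace X] (V : Set C(X, ℝ)) [CompactSpace V]
    (f : C(V, ℝ)) (ε : ℝ) (hε : 0 < ε) :
    ∃ g ∈ Submodule.span ℝ (Set.range (expMap V)), ∀ u, |f u - g u| < ε := by
  let A : Subalgebra ℝ C(V, ℝ) := Algebra.adjoin ℝ (expMonoid V : Set C(V, ℝ))
  have hA : A.SeparatesPoints := by
    intro u v huv
    have : ∃ x, (u : C(X, ℝ)) x ≠ (v : C(X, ℝ)) x := by
      by_contra hcon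
      push Not at hcon
      exact huv (Subtype.ext (ContinuousMap.ext hcon))
    obtain ⟨x, hx⟩ := this
    refine ⟨_, ⟨expMap V (Finsupp.single x 1), Algebra.subset_adjoin ⟨_, rfl⟩, rfl⟩, ?_⟩
    simpa [expMap, sensorMap] using hx
  obtain ⟨g, hg⟩ := ContinuousMap.exists_mem_subalgebra_near_continuous_of_separatesPoints A hA f
    f.continuous ε hε
  refine ⟨g, ?_, fun u => ?_⟩
  · have := g.2
    have h2 : (g : C(V, ℝ)) ∈ Subalgebra.toSubmodule A := this
    rw [Algebra.adjoin_eq_span, Submonoid.closure_eq] at h2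
    exact h2
  · rw [abs_sub_comm]; exact hg u


/-- **Uniform approximation of continuous functionals (branch net).**
Let `σ` be Tauber-Wiener, `K₁ ⊂ ℝᵈ` compact, `V` a compact subset of
`C(K₁, ℝ)`, and `f : V → ℝ` a continuous functional. For every `ε > 0`
there exist `m, M`, sensor points `x 1, …, x m ∈ K₁`, and reals
`c i, θ i, ξ i j` — all independent of `u` — such that
`|f u − ∑ i, c i * σ (∑ j, ξ i j * u (x j) + θ i)| ≤ ε` for all `u ∈ V`. -/
theorem branch_net_uniform_approximation_of_functionals
    (σ : ℝ → ℝ) (hσ : IsTauberWiener σ)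
    (d : ℕ) (hd : 1 ≤ d)
    (K₁ : Set (EuclideanSpace ℝ (Fin d))) (hK₁ : IsCompact K₁)
    (V : Set C(K₁, ℝ)) (hV : IsCompact V)
    (f : V → ℝ) (hf : Continuous f)
    (ε : ℝ) (hε : 0 < ε) :
    ∃ (m M : ℕ) (xs : Fin m → K₁) (c θ : Fin M → ℝ) (ξ : Fin M → Fin m → ℝ),
      ∀ u : V,
        |f u - ∑ i, c i * σ (∑ j, ξ i j * (u : C(K₁, ℝ)) (xs j) + θ i)| ≤ ε := by
  have : CompactSpace V := isCompact_iff_compactSpace.1 hV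
  obtain ⟨g, hg, H⟩ := exp_dense V ⟨f, hf⟩ (ε / 2) (by positivity)
  obtain ⟨h, hh, K⟩ := span_approx σ hσ V g hg (ε / 2) (by positivity)
  obtain ⟨m, M, xs, c, θ, ξ, E⟩ := netSpace_form σ V h hh
  refine ⟨m, M, xs, c, θ, ξ, fun u => ?_⟩
  rw [← E u]
  have h1 := abs_lt.1 (H u)
  have h2 := abs_le.1 (K u)
  simp only [ContinuousMap.coe_mk] at h1
  exact abs_le.2 ⟨by linarith [h1.1, h2.1], by linarith [h1.2, h2.2]⟩
end
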